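/- Let f be a singularity in O_3 (f(0)=0, ∇f(0)=0) and let {i,j,k} be a permutation of {1,2,3}. Suppose there exists a vertex W of the Newton boundary Γ(f) lying in the coordinate plane OX_iX_k at distance 1 from the axis OX_i, and that Γ^0(f) ∩ OX_iX_j is nonempty. If Y is the vertex in Γ^0(f) ∩ OX_iX_j with the smallest distance to the axis OX_i, then the segment joining W and Y is a 1-dimensional compact face (edge) of Γ(f). -/

import Mathlib

/-!
Write points as `(x_i, x_j, x_k)`. Vertices of the Newton boundary are points of the support, so
`W = (w, 0, 1)` and `Y = (y, d, 0)` with natural coordinates. The point of the support with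
`x_k = 0` that is lexicographically smallest for `(x_j, x_i)` is a vertex (`vertex_of_lexMin`: weigh
`x_k` far more heavily than `x_j`, and `x_j` far more heavily than `x_i`), and hence, by minimality
of the distance from `Y` to the axis, that point is `Y`.

The edge is supported by `u = (1, β, γ)` with `β` large and `γ = y - w + β d`, so that
`⟨u, W⟩ = ⟨u, Y⟩`. For `ν = (a, b, c)` in the support,
* if `c = 0`, then `⟨u, Y⟩ ≤ ⟨u, ν⟩` by lexicographic minimality of `Y`;
* if `c = 1`, the claim is `w ≤ a + β b`, which for `b = 0` holds because `W` is a vertex;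
* if `c ≥ 2`, then large `β` suffices unless `b = d = 0`, and in that case all three points lie
  in the plane `OX_iX_k` and the inequality says that `W` lies strictly below the segment from
  `Y` to `ν`, which holds because `W` is a vertex.

Equality holds only for `ν = W` and `ν = Y`, so the face cut out by `u` is the segment `WY`
(`faceOf_eq_convexHull`).
-/

open Finset Filter Topology

/-- The `i`-th partial derivative of `f`. -/
noncomputable def pder {n : ℕ} (i : Fin n) (f : (Fin n → ℂ) → ℂ) : (Fin n → ℂ) → ℂ :=
  fun z => fderiv ℂ f z (Pi.single i 1)

/-- The iterated partial derivative `∂^ν f` for a multi-index `ν`. -/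
noncomputable def mder {n : ℕ} (ν : Fin n → ℕ) (f : (Fin n → ℂ) → ℂ) : (Fin n → ℂ) → ℂ :=
  ((List.finRange n).map fun i => (pder i)^[ν i]).foldr (fun g acc => g acc) f

/-- The support of the Taylor expansion of `f` at `0`. -/
def NSupp {n : ℕ} (f : (Fin n → ℂ) → ℂ) : Set (Fin n → ℕ) :=
  {ν | mder ν f 0 ≠ 0}

/-- The Taylor coefficient `a_ν` of `f` at `0`. -/
noncomputable def coeffOf {n : ℕ} (f : (Fin n → ℂ) → ℂ) (ν : Fin n → ℕ) : ℂ :=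
  mder ν f 0 / ((∏ i, (ν i).factorial : ℕ) : ℂ)

/-- The Newton diagram `Γ₊(f)`: the convex hull of `⋃_{ν ∈ supp f} (ν + ℝ₊ⁿ)`. -/
def NDiag {n : ℕ} (f : (Fin n → ℂ) → ℂ) : Set (Fin n → ℝ) :=
  convexHull ℝ {x | ∃ ν ∈ NSupp f, ∀ i, (ν i : ℝ) ≤ x i}

/-- `l(u, A) = inf {⟨u, v⟩ : v ∈ A}`. -/
noncomputable def ell {n : ℕ} (u : Fin n → ℝ) (A : Set (Fin n → ℝ)) : ℝ :=
  sInf ((fun v => ∑ i, u i * v i) '' A)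

/-- The face `Δ(u, A) = {v ∈ A : ⟨u, v⟩ = l(u, A)}`. -/
def faceOf {n : ℕ} (u : Fin n → ℝ) (A : Set (Fin n → ℝ)) : Set (Fin n → ℝ) :=
  {v | v ∈ A ∧ ∑ i, u i * v i = ell u A}

/-- `S` is a compact face of the Newton diagram of `f` (member of the Newton boundary). -/
def IsCompactFace {n : ℕ} (f : (Fin n → ℂ) → ℂ) (S : Set (Fin n → ℝ)) : Prop :=
  ∃ u : Fin n → ℝ, (∀ i, 0 < u i) ∧ S = faceOf u (NDiag f)

/-- The dimension of a face, as the rank of the direction of its affine span. -/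
noncomputable def faceDim {n : ℕ} (S : Set (Fin n → ℝ)) : ℕ :=
  Module.finrank ℝ (affineSpan ℝ S).direction

/-- `Γ^k(f)`: the `k`-dimensional compact faces of the Newton boundary of `f`. -/
def GammaK {n : ℕ} (f : (Fin n → ℂ) → ℂ) (k : ℕ) : Set (Set (Fin n → ℝ)) :=
  {S | IsCompactFace f S ∧ faceDim S = k}

/-- The quasihomogeneous polynomial `f_S = Σ_{ν ∈ S} a_ν z^ν`. -/
noncomputable def facePoly {n : ℕ} (f : (Fin n → ℂ) → ℂ) (S : Set (Fin n → ℝ)) :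
    (Fin n → ℂ) → ℂ :=
  fun z => ∑' ν : {ν : Fin n → ℕ // (fun i => (ν i : ℝ)) ∈ S}, coeffOf f ν.1 * ∏ i, z i ^ ν.1 i

/-- `f` is nondegenerate in the Kouchnirenko sense. -/
def Nondeg {n : ℕ} (f : (Fin n → ℂ) → ℂ) : Prop :=
  ∀ S, IsCompactFace f S →
    ¬∃ z : Fin n → ℂ, (∀ i, z i ≠ 0) ∧ ∀ i, pder i (facePoly f S) z = 0

/-- `f` is a singularity: a nonzero holomorphic germ with `f 0 = 0`, `∇f 0 = 0`. -/
def IsSing {n : ℕ} (f : (Fin n → ℂ) → ℂ) : Prop :=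
  AnalyticAt ℂ f 0 ∧ (¬∀ᶠ z in 𝓝 0, f z = 0) ∧ f 0 = 0 ∧ ∀ i, pder i f 0 = 0

/-- `f` is an isolated singularity: `∇f` has an isolated zero at `0`. -/
def IsIsolSing {n : ℕ} (f : (Fin n → ℂ) → ℂ) : Prop :=
  IsSing f ∧ ∃ r > (0 : ℝ), ∀ z : Fin n → ℂ, ‖z‖ < r → z ≠ 0 → ∃ i, pder i f z ≠ 0

/-- Euclidean distance of a point of `ℝ³` to the `i`-th coordinate axis. -/
noncomputable def distAxis (i : Fin 3) (W : Fin 3 → ℝ) : ℝ :=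
  Real.sqrt (∑ j ∈ Finset.univ.erase i, (W j) ^ 2)

/-- The vertices (0-dimensional compact faces of the Newton boundary of `f`) lying in `S`. -/
def vtxOf (f : (Fin 3 → ℂ) → ℂ) (S : Set (Fin 3 → ℝ)) : Set (Fin 3 → ℝ) :=
  {A | IsCompactFace f {A} ∧ A ∈ S}

/-- `S` is an exceptional face with respect to the axis `OX_i`: one of its vertices `W` is
at distance `1` from `OX_i` and the remaining vertices constitute a `1`-dimensional face
lying in a coordinate plane containing `OX_i`. -/
def ExcWrt (f : (Fin 3 → ℂ) → ℂ) (i : Fin 3) (S : Set (Fin 3 → ℝ)) : Prop :=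
  ∃ W ∈ vtxOf f S, distAxis i W = 1 ∧
    ∃ T ∈ GammaK f 1, (∃ j, j ≠ i ∧ T ⊆ {x : Fin 3 → ℝ | x j = 0}) ∧
      vtxOf f T = vtxOf f S \ {W}

/-- The set `E_f` of exceptional 2-dimensional faces of `f`. -/
def Ef (f : (Fin 3 → ℂ) → ℂ) : Set (Set (Fin 3 → ℝ)) :=
  {S | S ∈ GammaK f 2 ∧ ∃ i, ExcWrt f i S}

/-- `I` is the segment `I_j^m` of the family `𝒥` for the given `m`. -/
def segJ (m : ℕ) (I : Set (Fin 3 → ℝ)) : Prop :=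
  I = segment ℝ ![0, 1, 1] ![(m : ℝ), 0, 0] ∨
  I = segment ℝ ![1, 0, 1] ![0, (m : ℝ), 0] ∨
  I = segment ℝ ![1, 1, 0] ![0, 0, (m : ℝ)]

/-- `I` belongs to the family `𝒥 = {I_j^k : j = 1,2,3, k ≥ 2}`. -/
def InJ (I : Set (Fin 3 → ℝ)) : Prop := ∃ m : ℕ, 2 ≤ m ∧ segJ m I

/-- A multi-index regarded as a point of `ℝⁿ`. -/
def toPt {n : ℕ} (ν : Fin n → ℕ) : Fin n → ℝ := fun l => (ν l : ℝ)

lemma toPt_injective {n : ℕ} : Function.Injective (toPt (n := n)) := fun _ _ h =>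
  funext fun l => Nat.cast_injective (congrFun h l)

/-- The pairing `⟨u, v⟩`, in the form used by `ell` and `faceOf`. -/
def dot {n : ℕ} (u v : Fin n → ℝ) : ℝ := ∑ l, u l * v l

lemma dot_comb {n : ℕ} (u x y : Fin n → ℝ) (a b : ℝ) :
    dot u (a • x + b • y) = a * dot u x + b * dot u y := by
  simp only [dot, Finset.mul_sum, ← Finset.sum_add_distrib]
  refine Finset.sum_congr rfl fun l _ => ?_
  simp only [Pi.add_apply, Pi.smul_apply, smul_eq_mul]
  ring

lemma dot_le {n : ℕ} {u x y : Fin n → ℝ} (hu : ∀ l, 0 < u l) (h : ∀ l, x l ≤ y l) :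
    dot u x ≤ dot u y :=
  Finset.sum_le_sum fun l _ => mul_le_mul_of_nonneg_left (h l) (hu l).le

lemma eq_of_dot_eq {n : ℕ} {u x y : Fin n → ℝ} (hu : ∀ l, 0 < u l) (h : ∀ l, x l ≤ y l)
    (he : dot u x = dot u y) : x = y := by
  have h1 := (Finset.sum_eq_sum_iff_of_le (s := Finset.univ) (f := fun l => u l * x l)
    (g := fun l => u l * y l)
    fun l _ => mul_le_mul_of_nonneg_left (h l) (hu l).le).1 he
  funext l
  exact mul_left_cancel₀ (hu l).ne' (h1 l (Finset.mem_univ l))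

lemma toPt_mem {n : ℕ} {f : (Fin n → ℂ) → ℂ} {ν : Fin n → ℕ} (h : ν ∈ NSupp f) :
    toPt ν ∈ NDiag f :=
  subset_convexHull ℝ _ ⟨ν, h, fun _ => le_rfl⟩

/-- If a positive linear form attains its minimum over the support exactly at the points of `T`,
the face it cuts out is the convex hull of `T`. -/
lemma faceOf_eq_convexHull {n : ℕ} {f : (Fin n → ℂ) → ℂ} {u : Fin n → ℝ} (hu : ∀ l, 0 < u l)
    {m : ℝ} {T : Set (Fin n → ℝ)} (hT : ∀ x ∈ T, x ∈ NDiag f ∧ dot u x = m) (hne : T.Nonempty)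
    (h : ∀ ν ∈ NSupp f, m < dot u (toPt ν) ∨ toPt ν ∈ T) :
    faceOf u (NDiag f) = convexHull ℝ T := by
  -- The half-space `m < ⟨u, x⟩` together with the hull of `T` is convex, so it contains `NDiag f`.
  have key : NDiag f ⊆ {x | m ≤ dot u x ∧ (dot u x = m → x ∈ convexHull ℝ T)} := by
    refine convexHull_min ?_ ?_
    · rintro x ⟨ν, hν, hx⟩
      have hle : dot u (toPt ν) ≤ dot u x := dot_le hu hx
      rcases h ν hν with h1 | h1
      · exact ⟨(h1.trans_le hle).le, fun h2 => absurd h2 (h1.trans_le hle).ne'⟩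
      · have h2 := (hT _ h1).2
        refine ⟨h2 ▸ hle, fun h3 => ?_⟩
        rw [← eq_of_dot_eq hu (x := toPt ν) hx (h2.trans h3.symm)]
        exact subset_convexHull ℝ _ h1
    · rintro x ⟨hx1, hx2⟩ y ⟨hy1, hy2⟩ a b ha hb hab
      rcases ha.eq_or_lt with rfl | ha
      · obtain rfl : b = 1 := by linarith
        simpa using ⟨hy1, hy2⟩
      rcases hb.eq_or_lt with rfl | hb
      · obtain rfl : a = 1 := by linarith
        simpa using ⟨hx1, hx2⟩
      simp only [Set.mem_ofPred_eq, dot_comb]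
      have e1 := mul_le_mul_of_nonneg_left hx1 ha.le
      have e2 := mul_le_mul_of_nonneg_left hy1 hb.le
      have e3 : a * m + b * m = m := by rw [← add_mul, hab, one_mul]
      refine ⟨by linarith, fun he => ?_⟩
      have f1 : dot u x = m := mul_left_cancel₀ ha.ne' (by linarith)
      have f2 : dot u y = m := mul_left_cancel₀ hb.ne' (by linarith)
      exact (convex_convexHull ℝ T) (hx2 f1) (hy2 f2) ha.le hb.le hab
  have hell : ell u (NDiag f) = m := by
    obtain ⟨t, ht⟩ := hne
    have hleast : IsLeast ((fun v => ∑ l, u l * v l) '' NDiag f) m :=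
      ⟨⟨t, (hT t ht).1, (hT t ht).2⟩, by rintro _ ⟨x, hx, rfl⟩; exact (key hx).1⟩
    exact hleast.csInf_eq
  have hsub : convexHull ℝ T ⊆ {x | x ∈ NDiag f ∧ dot u x = m} := by
    refine convexHull_min hT ?_
    rintro x ⟨hx1, hx2⟩ y ⟨hy1, hy2⟩ a b ha hb hab
    refine ⟨convex_convexHull ℝ _ hx1 hy1 ha hb hab, ?_⟩
    rw [dot_comb, hx2, hy2, ← add_mul, hab, one_mul]
  ext x
  constructor
  · rintro ⟨hx, hxm⟩
    exact (key hx).2 (hxm.trans hell)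
  · intro hx
    exact ⟨(hsub hx).1, (hsub hx).2.trans hell.symm⟩

/-- A vertex is a point of the support, and strictly minimises a positive linear form over it. -/
lemma exists_of_vertex {n : ℕ} {f : (Fin n → ℂ) → ℂ} {A : Fin n → ℝ}
    (hA : IsCompactFace f {A}) :
    ∃ u : Fin n → ℝ, (∀ l, 0 < u l) ∧ ∃ α ∈ NSupp f, A = toPt α ∧
      ∀ ν ∈ NSupp f, ν ≠ α → dot u (toPt α) < dot u (toPt ν) := by
  obtain ⟨u, hu, hface⟩ := hA
  have hAf : A ∈ faceOf u (NDiag f) := hface ▸ Set.mem_singleton A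
  have hbdd : BddBelow ((fun v => ∑ l, u l * v l) '' NDiag f) := by
    refine ⟨0, ?_⟩
    rintro _ ⟨x, hx, rfl⟩
    have hsub : NDiag f ⊆ {x | ∀ l, 0 ≤ x l} := by
      refine convexHull_min ?_ ?_
      · rintro x ⟨ν, -, hx⟩ l
        exact (Nat.cast_nonneg _).trans (hx l)
      · intro x hx y hy a b ha hb _ l
        exact add_nonneg (mul_nonneg ha (hx l)) (mul_nonneg hb (hy l))
    exact Finset.sum_nonneg fun l _ => mul_nonneg (hu l).le (hsub hx l)
  have hle : ∀ x ∈ NDiag f, ell u (NDiag f) ≤ dot u x := fun x hx =>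
    csInf_le hbdd ⟨x, hx, rfl⟩
  have huniq : ∀ x ∈ NDiag f, dot u x = ell u (NDiag f) → x = A := fun x hx he => by
    have h1 : x ∈ faceOf u (NDiag f) := ⟨hx, he⟩
    rw [← hface] at h1
    exact h1
  have hex : ∃ α ∈ NSupp f, dot u (toPt α) ≤ ell u (NDiag f) := by
    -- Otherwise the open half-space `ell u < ⟨u, x⟩` would contain all of `NDiag f`, `A` included.
    by_contra! hno
    have hsub : NDiag f ⊆ {x | ell u (NDiag f) < dot u x} := by
      refine convexHull_min ?_ ?_
      · rintro x ⟨ν, hν, hx⟩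
        exact (hno ν hν).trans_le (dot_le hu hx)
      · intro x hx y hy a b ha hb hab
        have := (convex_Ioi (ell u (NDiag f))) hx hy ha hb hab
        change ell u (NDiag f) < dot u (a • x + b • y)
        rw [dot_comb]
        exact this
    exact (hsub hAf.1).ne' hAf.2
  obtain ⟨α, hα, hαle⟩ := hex
  have hαe := le_antisymm hαle (hle _ (toPt_mem hα))
  have hαA := huniq _ (toPt_mem hα) hαe
  refine ⟨u, hu, α, hα, hαA.symm, fun ν hν hne => ?_⟩
  rw [hαe]
  refine lt_of_le_of_ne (hle _ (toPt_mem hν)) fun he => hne ?_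
  have := (huniq _ (toPt_mem hν) he.symm).trans hαA.symm
  exact toPt_injective this

lemma vertex_of_dot_lt {n : ℕ} {f : (Fin n → ℂ) → ℂ} {u : Fin n → ℝ} (hu : ∀ l, 0 < u l)
    {α : Fin n → ℕ} (hα : α ∈ NSupp f)
    (h : ∀ ν ∈ NSupp f, ν ≠ α → dot u (toPt α) < dot u (toPt ν)) :
    IsCompactFace f {toPt α} := by
  refine ⟨u, hu, ?_⟩
  rw [faceOf_eq_convexHull hu (m := dot u (toPt α)) (T := {toPt α}), convexHull_singleton]
  · rintro _ rfl
    exact ⟨toPt_mem hα, rfl⟩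
  · exact Set.singleton_nonempty _
  · intro ν hν
    by_cases hne : ν = α
    · exact Or.inr (by rw [hne]; rfl)
    · exact Or.inl (h ν hν hne)

lemma univ_eq_triple {i j k : Fin 3} (hij : i ≠ j) (hjk : j ≠ k) (hik : i ≠ k) :
    (Finset.univ : Finset (Fin 3)) = {i, j, k} := by
  revert i j k; decide

lemma funext_triple {α : Type*} {i j k : Fin 3} (hij : i ≠ j) (hjk : j ≠ k) (hik : i ≠ k)
    {x y : Fin 3 → α} (hi : x i = y i) (hj : x j = y j) (hk : x k = y k) : x = y := by
  funext l
  have : l ∈ ({i, j, k} : Finset (Fin 3)) := univ_eq_triple hij hjk hik ▸ Finset.mem_univ l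
  simp only [Finset.mem_insert, Finset.mem_singleton] at this
  rcases this with rfl | rfl | rfl <;> assumption

lemma dot_triple {i j k : Fin 3} (hij : i ≠ j) (hjk : j ≠ k) (hik : i ≠ k) (u v : Fin 3 → ℝ) :
    dot u v = u i * v i + u j * v j + u k * v k := by
  rw [dot, univ_eq_triple hij hjk hik, Finset.sum_insert (by simp [hij, hik]),
    Finset.sum_insert (by simp [hjk]), Finset.sum_singleton, add_assoc]

lemma distAxis_triple {i j k : Fin 3} (hij : i ≠ j) (hjk : j ≠ k) (hik : i ≠ k)
    (v : Fin 3 → ℝ) : distAxis i v = Real.sqrt (v j ^ 2 + v k ^ 2) := by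
  have : (Finset.univ : Finset (Fin 3)).erase i = {j, k} := by
    revert i j k; decide
  rw [distAxis, this, Finset.sum_pair hjk]

/-- The linear form with prescribed coefficients on the axes `i`, `j`, `k`. -/
lemma exists_form {i j k : Fin 3} (hij : i ≠ j) (hjk : j ≠ k) (hik : i ≠ k) {p q r : ℝ}
    (hp : 0 < p) (hq : 0 < q) (hr : 0 < r) :
    ∃ u : Fin 3 → ℝ, (∀ l, 0 < u l) ∧ ∀ v, dot u v = p * v i + q * v j + r * v k := by
  refine ⟨fun l => if l = i then p else if l = j then q else r, fun l => ?_, fun v => ?_⟩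
  · dsimp only
    split_ifs <;> assumption
  · rw [dot_triple hij hjk hik]
    simp [hij.symm, hik.symm, hjk.symm]

/-- The point of the support in the plane `x_k = 0` that is smallest for `(x_j, x_i)` in the
lexicographic order is a vertex. -/
lemma vertex_of_lexMin {f : (Fin 3 → ℂ) → ℂ} {i j k : Fin 3} (hij : i ≠ j) (hjk : j ≠ k)
    (hik : i ≠ k) {α : Fin 3 → ℕ} (hα : α ∈ NSupp f) (hk : α k = 0)
    (hj : ∀ ν ∈ NSupp f, ν k = 0 → α j ≤ ν j)
    (hi : ∀ ν ∈ NSupp f, ν k = 0 → ν j = α j → α i ≤ ν i) :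
    IsCompactFace f {toPt α} := by
  -- Weights making one step along `k` outweigh `α`, and one step along `j` outweigh `α i`.
  obtain ⟨u, hu, hdot⟩ := exists_form hij hjk hik (p := 1) (q := (α i : ℝ) + 1)
    (r := (α i : ℝ) + ((α i : ℝ) + 1) * (α j : ℝ) + 1) one_pos (by positivity) (by positivity)
  refine vertex_of_dot_lt hu hα fun ν hν hne => ?_
  rw [hdot, hdot]
  simp only [toPt, hk]
  have : α i + (α i + 1) * α j < ν i + (α i + 1) * ν j + (α i + (α i + 1) * α j + 1) * ν k := by
    rcases Nat.eq_zero_or_pos (ν k) with h0 | h0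
    · rcases (hj ν hν h0).eq_or_lt with h1 | h1
      · have h2 := hi ν hν h0 h1.symm
        have h3 : α i ≠ ν i := fun h3 => hne (funext_triple hij hjk hik h3.symm h1.symm
          (by rw [h0, hk]))
        rw [h0, ← h1]
        have := lt_of_le_of_ne h2 h3
        linarith
      · rw [h0]
        nlinarith [Nat.succ_le_of_lt h1, Nat.zero_le (ν i)]
    · nlinarith [Nat.succ_le_of_lt h0, Nat.zero_le (ν i),
        Nat.zero_le ((α i + 1) * ν j), Nat.zero_le (α i + (α i + 1) * α j)]
  have h' : ((α i + (α i + 1) * α j : ℕ) : ℝ) <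
      ((ν i + (α i + 1) * ν j + (α i + (α i + 1) * α j + 1) * ν k : ℕ) : ℝ) := by
    exact_mod_cast this
  push_cast at h'
  simpa using h'

lemma exists_lexMin {S : Set (Fin 3 → ℕ)} {i j k : Fin 3} (h : ∃ ν ∈ S, ν k = 0) :
    ∃ α ∈ S, α k = 0 ∧ (∀ ν ∈ S, ν k = 0 → α j ≤ ν j) ∧
      ∀ ν ∈ S, ν k = 0 → ν j = α j → α i ≤ ν i := by
  classical
  obtain ⟨ν, hν, hk⟩ := h
  have h1 : ∃ d, ∃ ν ∈ S, ν k = 0 ∧ ν j = d := ⟨_, ν, hν, hk, rfl⟩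
  obtain ⟨μ, hμ, hμk, hμj⟩ := Nat.find_spec h1
  have h2 : ∃ a, ∃ ν ∈ S, ν k = 0 ∧ ν j = Nat.find h1 ∧ ν i = a := ⟨_, μ, hμ, hμk, hμj, rfl⟩
  obtain ⟨α, hα, hαk, hαj, hαi⟩ := Nat.find_spec h2
  refine ⟨α, hα, hαk, fun ν hν hk => ?_, fun ν hν hk hj => ?_⟩
  · rw [hαj]
    exact Nat.find_min' h1 ⟨ν, hν, hk, rfl⟩
  · rw [hαi]
    exact Nat.find_min' h2 ⟨ν, hν, hk, hj.trans hαj, rfl⟩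

lemma faceDim_segment {n : ℕ} {x y : Fin n → ℝ} (h : x ≠ y) : faceDim (segment ℝ x y) = 1 := by
  rw [faceDim, ← convexHull_pair, affineSpan_convexHull, direction_affineSpan,
    vectorSpan_pair]
  exact finrank_span_singleton (vsub_ne_zero.2 h)

/-- if `W` is a vertex in the plane `OX_iX_k` at distance `1` from the axis
`OX_i`, and `Y` is the vertex in the plane `OX_iX_j` closest to `OX_i`, then the segment
`WY` is an edge of the Newton boundary. -/
theorem stmt12 (f : (Fin 3 → ℂ) → ℂ) (hf : IsSing f)
    (i j k : Fin 3) (hij : i ≠ j) (hjk : j ≠ k) (hik : i ≠ k)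
    (W : Fin 3 → ℝ) (hW : IsCompactFace f {W}) (hWp : W j = 0) (hWd : distAxis i W = 1)
    (Y : Fin 3 → ℝ) (hY : IsCompactFace f {Y}) (hYp : Y k = 0)
    (hYmin : ∀ B : Fin 3 → ℝ, IsCompactFace f {B} → B k = 0 →
      distAxis i Y ≤ distAxis i B) :
    segment ℝ W Y ∈ GammaK f 1 := by
  obtain ⟨s, hs, ω, hω, rfl, hωmin⟩ := exists_of_vertex hW
  obtain ⟨t, ht, η, hη, rfl, hηmin⟩ := exists_of_vertex hY
  have hωj : ω j = 0 := by simpa [toPt] using hWp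
  have hηk : η k = 0 := by simpa [toPt] using hYp
  have hωk : ω k = 1 := by
    rw [distAxis_triple hij hjk hik, hWp] at hWd
    have h1 : Real.sqrt ((ω k : ℝ) ^ 2) = 1 := by simpa [toPt] using hWd
    rw [Real.sqrt_sq (Nat.cast_nonneg _)] at h1
    exact_mod_cast h1
  -- `η` is itself the lexicographically smallest point of the support with `x_k = 0`.
  have hlex : (∀ ν ∈ NSupp f, ν k = 0 → η j ≤ ν j) ∧
      ∀ ν ∈ NSupp f, ν k = 0 → ν j = η j → η i ≤ ν i := by
    obtain ⟨α, hα, hαk, hαj, hαi⟩ := exists_lexMin (i := i) (j := j) ⟨η, hη, hηk⟩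
    have hd := hYmin _ (vertex_of_lexMin hij hjk hik hα hαk hαj hαi) (by simp [toPt, hαk])
    rw [distAxis_triple hij hjk hik, distAxis_triple hij hjk hik] at hd
    have hd' : η j ≤ α j := by
      simpa [toPt, hηk, hαk, Real.sqrt_sq] using hd
    have he : η j = α j := le_antisymm hd' (hαj η hη hηk)
    have hαη : α = η := by
      by_contra hne
      refine absurd (hηmin α hα hne) (not_lt.2 (dot_le ht fun l => Nat.cast_le.2 ?_))
      have hl : l ∈ ({i, j, k} : Finset (Fin 3)) :=
        univ_eq_triple hij hjk hik ▸ Finset.mem_univ l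
      simp only [Finset.mem_insert, Finset.mem_singleton] at hl
      rcases hl with rfl | rfl | rfl
      · exact hαi η hη hηk he
      · exact he.ge
      · exact (hαk.trans hηk.symm).le
    rw [← hαη]
    exact ⟨hαj, hαi⟩
  obtain ⟨hηj, hηi⟩ := hlex
  have hωη : η ≠ ω := fun h => by rw [h, hωk] at hηk; exact one_ne_zero hηk
  -- The inequalities expressing that `ω` strictly minimises `⟨s, ·⟩`, in coordinates.
  have hmin : ∀ ν ∈ NSupp f, ν ≠ ω →
      s i * ω i + s k < s i * ν i + s j * ν j + s k * ν k := fun ν hν hne => by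
    have := hωmin ν hν hne
    rw [dot_triple hij hjk hik, dot_triple hij hjk hik] at this
    simpa [toPt, hωj, hωk] using this
  have hsi := hs i
  have hsk := hs k
  have hY0 : η j = 0 → s k < s i * ((η i : ℝ) - ω i) := fun h0 => by
    have := hmin η hη hωη
    rw [h0, hηk] at this
    push_cast at this
    linarith
  have hY1 : η j = 0 → (ω i : ℝ) < η i := fun h0 => by
    have h1 : 0 < s i * ((η i : ℝ) - ω i) := hsk.trans (hY0 h0)
    have := pos_of_mul_pos_right h1 hsi.le
    linarith
  set w : ℝ := (ω i : ℝ) with hw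
  set y : ℝ := (η i : ℝ) with hy
  set d : ℝ := (η j : ℝ) with hd
  have hw0 : 0 ≤ w := Nat.cast_nonneg _
  have hy0 : 0 ≤ y := Nat.cast_nonneg _
  -- Any `β` larger than `2 w` and `y` works.
  obtain ⟨β, hβ⟩ : ∃ β : ℝ, β = 2 * w + y + 1 := ⟨_, rfl⟩
  have hd01 : η j = 0 ∨ 1 ≤ d := by
    rcases Nat.eq_zero_or_pos (η j) with h | h
    · exact Or.inl h
    · exact Or.inr (Nat.one_le_cast.2 h)
  have hγ : 0 < y - w + β * d := by
    rcases hd01 with h | h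
    · have := hY1 h
      have hd0 : d = 0 := by simp [hd, h]
      rw [hd0]; linarith
    · nlinarith
  obtain ⟨u, hu, hdot⟩ := exists_form hij hjk hik (p := 1) (q := β) one_pos (by linarith) hγ
  have huY : dot u (toPt η) = y + β * d := by
    rw [hdot]; simp [toPt, hηk, hy, hd]
  have huW : dot u (toPt ω) = y + β * d := by
    rw [hdot]; simp [toPt, hωk, hωj, ← hw]; ring
  have hne : toPt ω ≠ toPt η := fun h => hωη (toPt_injective h.symm)
  refine ⟨⟨u, hu, ?_⟩, faceDim_segment hne⟩
  rw [faceOf_eq_convexHull hu (m := y + β * d) (T := {toPt ω, toPt η}), convexHull_pair]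
  · rintro _ (rfl | rfl)
    · exact ⟨toPt_mem hω, huW⟩
    · exact ⟨toPt_mem hη, huY⟩
  · exact Set.insert_nonempty _ _
  intro ν hν
  by_cases hνω : ν = ω
  · exact Or.inr (by simp [hνω])
  by_cases hνη : ν = η
  · exact Or.inr (by simp [hνη])
  refine Or.inl ?_
  rw [hdot]
  simp only [toPt, one_mul]
  have ha0 : (0 : ℝ) ≤ ν i := Nat.cast_nonneg _
  have hb0 : (0 : ℝ) ≤ ν j := Nat.cast_nonneg _
  have hβ0 : 0 < β := by linarith
  obtain hc | hc | hc : ν k = 0 ∨ ν k = 1 ∨ 2 ≤ ν k := by omega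
  · rw [hc, Nat.cast_zero, mul_zero, add_zero]
    rcases (hηj ν hν hc).eq_or_lt with h1 | h1
    · have h2 := lt_of_le_of_ne (hηi ν hν hc h1.symm) fun h3 =>
        hνη (funext_triple hij hjk hik h3.symm h1.symm (hc.trans hηk.symm))
      have h2' : y < ν i := Nat.cast_lt.2 h2
      rw [← h1]
      linarith
    · have h2 : d + 1 ≤ ν j := by
        rw [hd]
        exact_mod_cast h1
      nlinarith
  · rw [hc, Nat.cast_one, mul_one]
    rcases Nat.eq_zero_or_pos (ν j) with h1 | h1
    · have h2 := hmin ν hν hνω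
      rw [h1, hc] at h2
      push_cast at h2
      have h3 : s i * w < s i * ν i := by linarith
      have h4 := lt_of_mul_lt_mul_left h3 hsi.le
      rw [h1, Nat.cast_zero]
      linarith
    · have h2 : (1 : ℝ) ≤ ν j := by exact_mod_cast h1
      nlinarith
  · have hc' : (2 : ℝ) ≤ ν k := by exact_mod_cast hc
    rcases hd01 with h0 | h0
    · have hd0 : d = 0 := by simp [hd, h0]
      have hwy := hY1 h0
      rw [hd0, mul_zero, add_zero, add_zero]
      rcases Nat.eq_zero_or_pos (ν j) with h1 | h1
      · have h2 := hmin ν hν hνω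
        rw [h1, Nat.cast_zero, mul_zero, add_zero] at h2
        -- Eliminate `s k` between `⟨s, W⟩ < ⟨s, Y⟩` and `⟨s, W⟩ < ⟨s, ν⟩`.
        have h3 := mul_lt_mul_of_pos_right (hY0 h0) (show (0 : ℝ) < ν k - 1 by linarith)
        have h4 : s i * y < s i * (ν i + (y - w) * ν k) := by linarith
        have h5 := lt_of_mul_lt_mul_left h4 hsi.le
        rw [h1, Nat.cast_zero, mul_zero, add_zero]
        exact h5
      · have h2 : (1 : ℝ) ≤ ν j := by exact_mod_cast h1
        have h3 : 0 < (y - w) * ν k := mul_pos (by linarith) (by linarith)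
        nlinarith
    · have h1 : β * 1 ≤ β * d := mul_le_mul_of_nonneg_left h0 hβ0.le
      have h2 : 0 ≤ (y - w + β * d) * (ν k - 2) := mul_nonneg hγ.le (by linarith)
      have h3 : 0 ≤ β * ν j := mul_nonneg hβ0.le hb0
      linarith
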